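/- Let m ≥ 1, let D be an m×m real symmetric positive semidefinite matrix, and let E be an m×m real symmetric positive definite matrix. Define φ : ℝᵐ → (−∞,+∞] by φ(x) = (xᵀEx)/(xᵀDx) if ‖x‖₂ = 1 and xᵀDx ≠ 0, and φ(x) = +∞ otherwise. Then for every x̂ with φ(x̂) < +∞ there exist d > 0, η > 0 and δ > 0 such that for every x with φ(x) < +∞, ‖x − x̂‖₂ < δ and φ(x̂) < φ(x) < φ(x̂) + η, one has ‖2Ex − 2φ(x)·Dx‖₂ / (xᵀDx) ≥ (2/d)·√(φ(x) − φ(x̂)). -/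

import Mathlib

open Filter Topology
open scoped RealInnerProductSpace

noncomputable section

/-- Matrix-vector product, as a map on Euclidean space. -/
def mvec {m : ℕ} (M : Matrix (Fin m) (Fin m) ℝ) (x : EuclideanSpace ℝ (Fin m)) :
    EuclideanSpace ℝ (Fin m) :=
  (EuclideanSpace.equiv (Fin m) ℝ).symm (M.mulVec (EuclideanSpace.equiv (Fin m) ℝ x))

/-- The quadratic form xᵀMx. -/
def qf {m : ℕ} (M : Matrix (Fin m) (Fin m) ℝ) (x : EuclideanSpace ℝ (Fin m)) : ℝ :=
  ∑ i, ∑ j, x i * M i j * x j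

open Classical in
/-- The generalized Rayleigh quotient φ(x) = xᵀEx/xᵀDx on the unit sphere. -/
def rayQuot {m : ℕ} (D E : Matrix (Fin m) (Fin m) ℝ) :
    EuclideanSpace ℝ (Fin m) → EReal :=
  fun x => if ‖x‖ = 1 ∧ qf D x ≠ 0 then ((qf E x / qf D x : ℝ) : EReal) else ⊤

theorem aux_mvec {m : ℕ} (M : Matrix (Fin m) (Fin m) ℝ) (x : EuclideanSpace ℝ (Fin m)) :
    mvec M x = Matrix.toEuclideanLin M x := rfl

theorem aux_qf {m : ℕ} (M : Matrix (Fin m) (Fin m) ℝ) (x : EuclideanSpace ℝ (Fin m)) :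
    qf M x = ⟪x, Matrix.toEuclideanLin M x⟫ := by
  rw [← aux_mvec]
  simp only [qf, PiLp.inner_apply]
  refine Finset.sum_congr rfl fun i _ => ?_
  have h : (mvec M x) i = ∑ j, M i j * x j := rfl
  rw [h, real_inner_comm]
  change _ = x i * ∑ j, M i j * x j
  rw [Finset.mul_sum]
  exact Finset.sum_congr rfl fun j _ => by ring

/-- For a symmetric operator, the quadratic form is bounded by the squared residual. -/
theorem aux_spec {V : Type*} [NormedAddCommGroup V] [InnerProductSpace ℝ V]
    [FiniteDimensional ℝ V] (A : V →ₗ[ℝ] V) (hA : A.IsSymmetric) :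
    ∃ C > 0, ∀ x, ⟪x, A x⟫ ≤ C * ‖A x‖ ^ 2 := by
  obtain ⟨f, hf⟩ := A.rangeRestrict.exists_rightInverse_of_surjective A.range_rangeRestrict
  let g := LinearMap.toContinuousLinearMap f
  refine ⟨‖g‖ + 1, by positivity, fun x => ?_⟩
  have h1 : A (g (A.rangeRestrict x)) = A x := by
    have := congrArg Subtype.val (LinearMap.congr_fun hf (A.rangeRestrict x))
    exact this
  have h2 : ⟪x, A x⟫ = ⟪A x, g (A.rangeRestrict x)⟫ := by
    rw [hA x, h1]
  have h3 : ‖g (A.rangeRestrict x)‖ ≤ ‖g‖ * ‖A x‖ := g.le_opNorm _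
  rw [h2]
  have h4 := real_inner_le_norm (A x) (g (A.rangeRestrict x))
  nlinarith [norm_nonneg (A x), mul_le_mul_of_nonneg_left h3 (norm_nonneg (A x))]

theorem aux_core {V : Type*} [NormedAddCommGroup V] [InnerProductSpace ℝ V]
    [FiniteDimensional ℝ V] (D E : V →ₗ[ℝ] V) (hD : D.IsSymmetric) (hE : E.IsSymmetric)
    (xh : V) (l : ℝ) (hq : 0 < ⟪xh, D xh⟫) :
    ∃ d > (0 : ℝ), ∃ η > (0 : ℝ), ∃ δ > (0 : ℝ), ∀ x : V, ‖x‖ = 1 → ‖x - xh‖ < δ →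
      ∀ t : ℝ, l < t → t < l + η → ⟪x, E x⟫ = t * ⟪x, D x⟫ →
      2 / d * Real.sqrt (t - l) ≤ ‖(2 : ℝ) • E x - (2 * t) • D x‖ / ⟪x, D x⟫ := by
  obtain ⟨C, hC, hspec⟩ := aux_spec (E - l • D) (by
    intro x y
    simp [inner_sub_left, inner_sub_right, inner_smul_left, inner_smul_right, hD x y, hE x y])
  let Dc := LinearMap.toContinuousLinearMap D
  set q0 := ⟪xh, D xh⟫ / 2 with hq0
  have hq0p : 0 < q0 := by positivity
  set K := ‖Dc‖ + 1 with hK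
  have hKp : 0 < K := by positivity
  have hDx : ∀ x : V, ‖x‖ = 1 → ‖D x‖ ≤ K := fun x hx => by
    have : ‖D x‖ ≤ ‖Dc‖ * ‖x‖ := Dc.le_opNorm x
    rw [hx] at this; linarith
  have hcont : Continuous fun x : V => ⟪x, D x⟫ :=
    continuous_id.inner Dc.continuous
  obtain ⟨δ, hδ, hball⟩ := Metric.mem_nhds_iff.1
    (hcont.continuousAt.eventually (lt_mem_nhds (show q0 < ⟪xh, D xh⟫ by rw [hq0]; linarith)))
  -- a is the linear rate
  set a := Real.sqrt (q0 / C) with ha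
  have hap : 0 < a := Real.sqrt_pos.2 (by positivity)
  have ha2 : a ^ 2 = q0 / C := Real.sq_sqrt (by positivity)
  refine ⟨2 * K / a, by positivity, (a / (2 * K)) ^ 2, by positivity, δ, hδ, ?_⟩
  intro x hx hxd t hlt htl hphi
  have hqx : q0 < ⟪x, D x⟫ := hball (by simpa [dist_eq_norm] using hxd)
  have hqK : ⟪x, D x⟫ ≤ K := by
    have := real_inner_le_norm x (D x)
    rw [hx, one_mul] at this
    exact this.trans (hDx x hx)
  set s := Real.sqrt (t - l) with hs
  have hs2 : s ^ 2 = t - l := Real.sq_sqrt (by linarith)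
  have hs0 : 0 ≤ s := Real.sqrt_nonneg _
  have hsη : s ≤ a / (2 * K) := by
    apply le_of_lt
    apply lt_of_pow_lt_pow_left₀ 2 (by positivity)
    rw [hs2]; linarith
  have hA : a * s ≤ ‖(E - l • D) x‖ := by
    refine (le_abs_self _).trans (abs_le_of_sq_le_sq ?_ (norm_nonneg _))
    have h := hspec x
    have h1 : ⟪x, (E - l • D) x⟫ = (t - l) * ⟪x, D x⟫ := by
      simp [inner_sub_right, inner_smul_right, hphi]; ring
    rw [h1] at h
    rw [mul_pow, ha2, hs2, div_mul_eq_mul_div, div_le_iff₀ hC]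
    nlinarith [mul_le_mul_of_nonneg_left hqx.le (sub_pos.2 hlt).le]
  have hr : a * s / 2 ≤ ‖E x - t • D x‖ := by
    have h1 : (E - l • D) x = (E x - t • D x) + (t - l) • D x := by
      simp [sub_smul]
    have h2 : ‖(E - l • D) x‖ ≤ ‖E x - t • D x‖ + (t - l) * K := by
      rw [h1]
      refine (norm_add_le _ _).trans ?_
      rw [norm_smul, Real.norm_eq_abs, abs_of_pos (sub_pos.2 hlt)]
      gcongr
      exact hDx x hx
    have h3 : (t - l) * K ≤ a * s / 2 := by
      rw [← hs2]
      rw [le_div_iff₀ (by positivity)] at hsη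
      nlinarith
    linarith
  have h2r : (2 : ℝ) • E x - (2 * t) • D x = (2 : ℝ) • (E x - t • D x) := by
    rw [smul_sub, smul_smul]
  rw [h2r, norm_smul, Real.norm_eq_abs, abs_two, le_div_iff₀ (hq0p.trans hqx)]
  have h5 : 2 / (2 * K / a) * s = (a * s) / K := by field_simp
  rw [h5]
  calc a * s / K * ⟪x, D x⟫ ≤ a * s / K * K := by gcongr
    _ = a * s := by field_simp
    _ ≤ _ := by linarith

/-- Proposition 6.4: the generalized Rayleigh quotient satisfies the KL property with
exponent 1/2 at every point of its domain. -/
theorem rayleigh_quotient_KL_exponent_half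
    {m : ℕ} (hm : 1 ≤ m)
    (D E : Matrix (Fin m) (Fin m) ℝ) (hD : D.PosSemidef) (hE : E.PosDef)
    (xh : EuclideanSpace ℝ (Fin m)) (hxh : rayQuot D E xh ≠ ⊤) :
    ∃ d > (0 : ℝ), ∃ η > (0 : ℝ), ∃ δ > (0 : ℝ),
      ∀ x : EuclideanSpace ℝ (Fin m), rayQuot D E x ≠ ⊤ → ‖x - xh‖ < δ →
        rayQuot D E xh < rayQuot D E x →
        rayQuot D E x < rayQuot D E xh + ((η : ℝ) : EReal) →
        2 / d * Real.sqrt ((rayQuot D E x).toReal - (rayQuot D E xh).toReal) ≤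
          ‖(2 : ℝ) • mvec E x - (2 * (rayQuot D E x).toReal) • mvec D x‖ / qf D x := by
  classical
  have hdom : ∀ x, rayQuot D E x ≠ ⊤ → ‖x‖ = 1 ∧ qf D x ≠ 0 := fun x hx => by
    by_contra h
    exact hx (by simp only [rayQuot]; rw [if_neg h])
  have hval : ∀ x, rayQuot D E x ≠ ⊤ → rayQuot D E x = ((qf E x / qf D x : ℝ) : EReal) :=
    fun x hx => by simp only [rayQuot]; rw [if_pos (hdom x hx)]
  have hDs : (Matrix.toEuclideanLin D).IsSymmetric :=
    Matrix.isSymmetric_toEuclideanLin_iff.2 hD.1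
  have hEs : (Matrix.toEuclideanLin E).IsSymmetric :=
    Matrix.isSymmetric_toEuclideanLin_iff.2 hE.1
  have hnn : 0 ≤ qf D xh := by
    have h := hD.dotProduct_mulVec_nonneg (xh : Fin m → ℝ)
    have h2 : qf D xh = star (xh : Fin m → ℝ) ⬝ᵥ (D.mulVec (xh : Fin m → ℝ)) := by
      simp [qf, dotProduct, Matrix.mulVec, Finset.mul_sum, mul_assoc]
    rw [h2]; exact h
  have hpos : 0 < qf D xh := lt_of_le_of_ne hnn (hdom xh hxh).2.symm
  obtain ⟨d, hd, η, hη, δ, hδ, H⟩ := aux_core _ _ hDs hEs xh (qf E xh / qf D xh)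
    (by rw [← aux_qf]; exact hpos)
  refine ⟨d, hd, η, hη, δ, hδ, fun x hx hxd h1 h2 => ?_⟩
  rw [hval x hx, hval xh hxh] at h1 h2 ⊢
  rw [← EReal.coe_add] at h2
  rw [EReal.coe_lt_coe_iff] at h1 h2
  rw [EReal.toReal_coe, EReal.toReal_coe, aux_mvec, aux_mvec]
  have := H x (hdom x hx).1 hxd (qf E x / qf D x) h1 h2 (by
    rw [← aux_qf, ← aux_qf, div_mul_cancel₀ _ (hdom x hx).2])
  rw [← aux_qf] at this
  exact this
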